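/- Let γ > 0, ε > 0, and let u₀ : ℝ → ℝ be a twice continuously differentiable 1-periodic function with ∫₀¹ u₀(x) dx = 0. Let T₁ be the smallest positive root of 2√γ T₁ (‖u₀‖_{L∞} + γ T₁ ‖u₀‖_{L²})^{1/2} = log(1 + 2/ε), and assume there exists x₀ ∈ ℝ with u₀'(x₀) ≤ −(1+ε) √γ (‖u₀‖_{L∞} + γ T₁ ‖u₀‖_{L²})^{1/2}. Then wave breaking occurs before T₁: every periodic classical solution u of the Ostrovsky–Hunter equation on [0,T) with u(0,·) = u₀ and with u_x bounded from below on [0,T) × ℝ has T < T₁. -/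

import Mathlib

open MeasureTheory Filter Set intervalIntegral

/-- A periodic (period `1` in `x`) classical solution of the Ostrovsky–Hunter
equation `(u_t + u u_x)_x = γ u` on the set `S` of times (typically `[0,T)`):
`u` is `1`-periodic in `x`, continuously differentiable in `t`, twice
continuously differentiable in `x`, with `u_tx` continuous, and the expanded
equation `u_tx + u_x² + u u_xx = γ u` holds pointwise at positive times of `S`. -/
structure IsPeriodicOHSolution (γ : ℝ) (S : Set ℝ) (u : ℝ → ℝ → ℝ) : Prop where
  periodic : ∀ t ∈ S, ∀ x : ℝ, u t (x + 1) = u t x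
  diff_t : ∀ t ∈ S, ∀ x : ℝ, DifferentiableAt ℝ (fun s => u s x) t
  diff_x : ∀ t ∈ S, ∀ x : ℝ, DifferentiableAt ℝ (u t) x
  diff_xx : ∀ t ∈ S, ∀ x : ℝ, DifferentiableAt ℝ (deriv (u t)) x
  diff_tx : ∀ t ∈ S, ∀ x : ℝ, DifferentiableAt ℝ (fun y => deriv (fun s => u s y) t) x
  cont_u : ContinuousOn (fun p : ℝ × ℝ => u p.1 p.2) (S ×ˢ (Set.univ : Set ℝ))
  cont_ut : ContinuousOn (fun p : ℝ × ℝ => deriv (fun s => u s p.2) p.1)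
      (S ×ˢ (Set.univ : Set ℝ))
  cont_ux : ContinuousOn (fun p : ℝ × ℝ => deriv (u p.1) p.2) (S ×ˢ (Set.univ : Set ℝ))
  cont_uxx : ContinuousOn (fun p : ℝ × ℝ => deriv (deriv (u p.1)) p.2)
      (S ×ˢ (Set.univ : Set ℝ))
  cont_utx : ContinuousOn (fun p : ℝ × ℝ => deriv (fun y => deriv (fun s => u s y) p.1) p.2)
      (S ×ˢ (Set.univ : Set ℝ))
  eqn : ∀ t ∈ S, 0 < t → ∀ x : ℝ,
    deriv (fun y => deriv (fun s => u s y) t) x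
      + (deriv (u t) x) ^ 2 + u t x * deriv (deriv (u t)) x = γ * u t x

/-!
Write `w = u_t + u u_x`, so that `w_x = γ u`. Periodicity of `w` forces `u` to have mean zero, hence
also `u_t` and `w`; moreover `u u_t` is an exact `x`-derivative, so `‖u(t)‖_{L²}` is conserved.
A mean-zero `w` vanishes somewhere in each period, whence `|w| ≤ γ ‖u₀‖_{L²}`: along a
characteristic `X' = u(t, X)` the solution `u` grows at most linearly. Its slope
`V(t) = u_x(t, X(t))` therefore satisfies `V' = γ u - V² < k² - V²` with
`k² = γ (‖u₀‖_{L∞} + γ T₁ ‖u₀‖_{L²})`, and stays below `-k coth(k (T₁ - t))`; the equation for `T₁`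
is exactly `(1 + ε) k = k coth(k T₁)`. Since the differential inequality is strict, the slope drops
below a barrier `-k coth(k (σ - t))` with `σ < T₁`, so it already blows up before `T₁`.
-/

open scoped Topology NNReal

section Calculus

variable {𝕜 E : Type*} [RCLike 𝕜] [NormedAddCommGroup E]

lemma hasDerivAt_intervalIntegral_of_continuousOn [NormedSpace ℝ E] [NormedSpace 𝕜 E]
    {F F' : 𝕜 → ℝ → E} {s : Set 𝕜} {t : 𝕜} {a b : ℝ} (hs : s ∈ 𝓝 t)
    (hF : ∀ r ∈ s, ContinuousOn (F r) (uIcc a b))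
    (hF' : ContinuousOn (fun p : 𝕜 × ℝ => F' p.1 p.2) (s ×ˢ uIcc a b))
    (hderiv : ∀ r ∈ s, ∀ x ∈ uIcc a b, HasDerivAt (fun r => F r x) (F' r x) r) :
    HasDerivAt (fun r => ∫ x in a..b, F r x) (∫ x in a..b, F' t x) t := by
  obtain ⟨δ, hδ, hball⟩ := Metric.nhds_basis_closedBall.mem_iff.1 hs
  have hF't : ContinuousOn (F' t) (uIcc a b) :=
    hF'.comp (f := fun x => (t, x)) (by fun_prop) fun x hx => ⟨mem_of_mem_nhds hs, hx⟩
  obtain ⟨C, hC⟩ := ((isCompact_closedBall t δ).prod isCompact_uIcc).exists_bound_of_continuousOn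
    (hF'.mono (prod_mono hball subset_rfl))
  refine (intervalIntegral.hasDerivAt_integral_of_dominated_loc_of_deriv_le
    (bound := fun _ => C) (Metric.closedBall_mem_nhds t hδ) ?_
    (hF t (mem_of_mem_nhds hs)).intervalIntegrable ?_
    (Eventually.of_forall fun x hx r hr => hC (r, x) ⟨hr, uIoc_subset_uIcc hx⟩)
    intervalIntegrable_const
    (Eventually.of_forall fun x hx r hr => hderiv r (hball hr) x (uIoc_subset_uIcc hx))).2
  · filter_upwards [hs] with r hr
    exact ((hF r hr).mono uIoc_subset_uIcc).aestronglyMeasurable measurableSet_uIoc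
  · exact (hF't.mono uIoc_subset_uIcc).aestronglyMeasurable measurableSet_uIoc

lemma continuousOn_intervalIntegral_of_continuousOn [NormedSpace ℝ E] {X : Type*}
    [TopologicalSpace X] {s : Set X} {f : X → ℝ → E}
    (hf : ContinuousOn (fun p : X × ℝ => f p.1 p.2) (s ×ˢ univ)) (a b : ℝ) :
    ContinuousOn (fun t => ∫ x in a..b, f t x) s := by
  rw [continuousOn_iff_continuous_domRestrict]
  exact intervalIntegral.continuous_parametric_intervalIntegral_of_continuous'
    (f := fun (t : s) x => f t x)
    (hf.comp_continuous (f := fun p : s × ℝ => (p.1.1, p.2)) (by fun_prop)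
      fun p => ⟨p.1.2, trivial⟩) a b

lemma hasDerivAt_comp_curve [NormedSpace 𝕜 E] {f ft fx : 𝕜 → 𝕜 → E} {X : 𝕜 → 𝕜} {X' t : 𝕜}
    (hft : ∀ᶠ p : 𝕜 × 𝕜 in 𝓝 (t, X t), HasDerivAt (fun r => f r p.2) (ft p.1 p.2) p.1)
    (hfx : ∀ᶠ p : 𝕜 × 𝕜 in 𝓝 (t, X t), HasDerivAt (f p.1) (fx p.1 p.2) p.2)
    (hft_cont : ContinuousAt (fun p : 𝕜 × 𝕜 => ft p.1 p.2) (t, X t))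
    (hfx_cont : ContinuousAt (fun p : 𝕜 × 𝕜 => fx p.1 p.2) (t, X t))
    (hX : HasDerivAt X X' t) :
    HasDerivAt (fun r => f r (X r)) (ft t (X t) + X' • fx t (X t)) t := by
  let Φ : E →L[𝕜] 𝕜 →L[𝕜] E := ContinuousLinearMap.toSpanSingletonCLE.toContinuousLinearMap
  have hstrict := hasStrictFDerivAt_uncurry_coprod (𝕜 := 𝕜) (u := (t, X t)) (f := f)
    (f₁ := fun r y => Φ (ft r y)) (f₂ := fun r y => Φ (fx r y))
    (hft.mono fun _ hp => hp.hasFDerivAt) (hfx.mono fun _ hp => hp.hasFDerivAt)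
    (Φ.continuous.continuousAt.comp hft_cont) (Φ.continuous.continuousAt.comp hfx_cont)
  refine (hstrict.hasFDerivAt.comp_hasDerivAt t ((hasDerivAt_id t).prodMk hX)).congr_deriv ?_
  change (1 : 𝕜) • ft t (X t) + X' • fx t (X t) = _
  rw [one_smul]

-- Differentiating `f r y - f t y = ∫ ∂ₜf` in `y` gives `∂ₓf r x - ∂ₓf t x = ∫ ∂ₓ∂ₜf`,
-- which is then differentiated in `r`.
lemma hasDerivAt_partialDeriv_of_mixed [NormedSpace ℝ E] [CompleteSpace E]
    {f ft fx ftx : ℝ → ℝ → E} {s : Set ℝ} {t x : ℝ} (hs : s ∈ 𝓝 t)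
    (hft : ∀ r ∈ s, ∀ y, HasDerivAt (fun r => f r y) (ft r y) r)
    (hfx : ∀ r ∈ s, HasDerivAt (f r) (fx r x) x)
    (hftx : ∀ r ∈ s, ∀ y, HasDerivAt (ft r) (ftx r y) y)
    (hft_cont : ∀ y, ContinuousOn (fun r => ft r y) s)
    (hftx_cont : ContinuousOn (fun p : ℝ × ℝ => ftx p.1 p.2) (s ×ˢ univ)) :
    HasDerivAt (fun r => fx r x) (ftx t x) t := by
  have hftx_slice : ContinuousOn (fun r => ftx r x) s :=
    hftx_cont.comp (f := fun r => (r, x)) (by fun_prop) fun r hr => ⟨hr, trivial⟩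
  have hprimitive : HasDerivAt (fun r => fx t x + ∫ q in t..r, ftx q x) (ftx t x) t :=
    (intervalIntegral.integral_hasDerivAt_right (by simp)
      ((hftx_slice.mono interior_subset).stronglyMeasurableAtFilter isOpen_interior t
        (mem_interior_iff_mem_nhds.2 hs))
      (hftx_slice.continuousAt hs)).const_add _
  refine hprimitive.congr_of_eventuallyEq ?_
  have hseg : ∀ᶠ r in 𝓝 t, uIcc t r ⊆ s :=
    tendsto_smallSets_iff.1 (tendsto_const_nhds.uIcc tendsto_id) s hs
  filter_upwards [hseg] with r hr
  have hleibniz : HasDerivAt (fun y => ∫ q in t..r, ft q y) (∫ q in t..r, ftx q x) x :=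
    hasDerivAt_intervalIntegral_of_continuousOn (F := fun y q => ft q y)
      (F' := fun y q => ftx q y) univ_mem (fun y _ => (hft_cont y).mono hr)
      (hftx_cont.comp (f := fun p : ℝ × ℝ => (p.2, p.1)) (by fun_prop)
        fun p hp => ⟨hr hp.2, trivial⟩)
      fun y _ q hq => hftx q (hr hq) y
  have hftc : (fun y => ∫ q in t..r, ft q y) = fun y => f r y - f t y := by
    funext y
    exact intervalIntegral.integral_eq_sub_of_hasDerivAt (fun q hq => hft q (hr hq) y)
      ((hft_cont y).mono hr).intervalIntegrable
  rw [hftc] at hleibniz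
  have hdiff := (hfx r (hr right_mem_uIcc)).sub (hfx t (mem_of_mem_nhds hs))
  rw [hleibniz.unique hdiff]
  abel

lemma abs_le_integral_abs_deriv_of_integral_eq_zero {f f' : ℝ → ℝ} {a b x : ℝ} (hab : a < b)
    (hf : ∀ y ∈ Icc a b, HasDerivAt f (f' y) y) (hf' : IntervalIntegrable f' volume a b)
    (hmean : ∫ y in a..b, f y = 0) (hx : x ∈ Icc a b) :
    |f x| ≤ ∫ y in a..b, |f' y| := by
  have hcont : ContinuousOn f (uIcc a b) := by
    rw [uIcc_of_le hab.le]
    exact HasDerivAt.continuousOn hf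
  obtain ⟨c, hc, hfc⟩ : ∃ c ∈ Icc a b, f c = 0 := by
    obtain ⟨c, hc, hfc⟩ := exists_eq_interval_average hab.ne hcont
    rw [interval_average_eq, hmean, smul_zero] at hfc
    exact ⟨c, Ioo_subset_Icc_self (uIoo_of_lt hab ▸ hc), hfc⟩
  have hcx : uIcc c x ⊆ Icc a b := ordConnected_Icc.uIcc_subset hc hx
  have hcx' : uIcc c x ⊆ uIcc a b := hcx.trans Icc_subset_uIcc
  have hftc : ∫ y in c..x, f' y = f x := by
    rw [intervalIntegral.integral_eq_sub_of_hasDerivAt (fun y hy => hf y (hcx hy))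
      (hf'.mono_set hcx'), hfc, sub_zero]
  calc |f x| = |∫ y in c..x, f' y| := by rw [hftc]
    _ ≤ |(∫ y in c..x, |f' y|)| := by
        simpa only [Real.norm_eq_abs] using intervalIntegral.norm_integral_le_abs_integral_norm
          (f := f') (a := c) (b := x) (μ := volume)
    _ ≤ |(∫ y in a..b, |f' y|)| :=
        intervalIntegral.abs_integral_mono_interval (uIoc_subset_uIoc_of_uIcc_subset_uIcc hcx')
          (Eventually.of_forall fun y => abs_nonneg _) hf'.abs
    _ = ∫ y in a..b, |f' y| :=
        abs_of_nonneg (intervalIntegral.integral_nonneg hab.le fun y _ => abs_nonneg _)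

lemma integral_abs_le_sqrt_integral_sq {Ω : Type*} [MeasurableSpace Ω] {μ : Measure Ω}
    [IsProbabilityMeasure μ] {f : Ω → ℝ} (hf : MemLp f 2 μ) :
    ∫ ω, |f ω| ∂μ ≤ √(∫ ω, f ω ^ 2 ∂μ) := by
  apply Real.le_sqrt_of_sq_le
  have hvar := ProbabilityTheory.variance_nonneg |f| μ
  rw [ProbabilityTheory.variance_eq_sub hf.abs] at hvar
  simpa only [Pi.pow_apply, Pi.abs_apply, sq_abs, sub_nonneg] using hvar

lemma exists_nnnorm_le_of_periodic {X : Type*} [TopologicalSpace X] {K : Set X}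
    (hK : IsCompact K) {f : X → ℝ → E} {c : ℝ} (hc : 0 < c)
    (hf : ContinuousOn (fun p : X × ℝ => f p.1 p.2) (K ×ˢ univ))
    (hper : ∀ t ∈ K, Function.Periodic (f t) c) :
    ∃ C : ℝ≥0, ∀ t ∈ K, ∀ x, ‖f t x‖₊ ≤ C := by
  obtain ⟨C, hC⟩ := (hK.prod isCompact_Icc).exists_bound_of_continuousOn
    (hf.mono (prod_mono subset_rfl (subset_univ (Icc 0 c))))
  refine ⟨C.toNNReal, fun t ht x => ?_⟩
  obtain ⟨y, hy, hxy⟩ := (hper t ht).exists_mem_Ico₀ hc x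
  rw [hxy]
  exact NNReal.coe_le_coe.1 ((hC (t, y) ⟨ht, Ico_subset_Icc_self hy⟩).trans C.le_coe_toNNReal)

lemma exists_hasDerivWithinAt_of_bounded_lipschitz [NormedSpace ℝ E] [CompleteSpace E]
    {v : ℝ → E → E} {a b : ℝ} {C K : ℝ≥0} (hab : a ≤ b)
    (hv_cont : ∀ x, ContinuousOn (fun t => v t x) (Icc a b))
    (hv_bound : ∀ t ∈ Icc a b, ∀ x, ‖v t x‖₊ ≤ C)
    (hv_lip : ∀ t ∈ Icc a b, LipschitzWith K (v t)) (x : E) :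
    ∃ X : ℝ → E, X a = x ∧ ∀ t ∈ Icc a b, HasDerivWithinAt X (v t (X t)) (Icc a b) t :=
  IsPicardLindelof.exists_eq_forall_mem_Icc_hasDerivWithinAt₀
    (t₀ := ⟨a, left_mem_Icc.2 hab⟩) (a := C * (b - a).toNNReal) (L := C) (K := K)
    { lipschitzOnWith := fun t ht => (hv_lip t ht).lipschitzOnWith
      continuousOn := fun x _ => hv_cont x
      norm_le := fun t ht x _ => hv_bound t ht x
      mul_max_le := by simp [hab] }

end Calculus

section Riccati

lemma neg_of_deriv_add_mul_neg {φ φ' V : ℝ → ℝ} {a b : ℝ} (hab : a < b)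
    (hφ : ContinuousOn φ (Icc a b)) (hV : ContinuousOn V (Icc a b))
    (hφ' : ∀ t ∈ Ioo a b, HasDerivAt φ (φ' t) t) (hlt : ∀ t ∈ Ioo a b, φ' t + V t * φ t < 0)
    (ha : φ a ≤ 0) : φ b < 0 := by
  let A : ℝ → ℝ := fun t => ∫ r in a..t, V r
  have hA : ∀ t ∈ Ioo a b, HasDerivAt A (V t) t := fun t ht =>
    intervalIntegral.integral_hasDerivAt_right
      ((hV.mono (Icc_subset_Icc_right ht.2.le)).intervalIntegrable_of_Icc ht.1.le)
      ((hV.mono Ioo_subset_Icc_self).stronglyMeasurableAtFilter isOpen_Ioo t ht)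
      (hV.continuousAt (Icc_mem_nhds ht.1 ht.2))
  have hA_cont : ContinuousOn A (Icc a b) := by
    rw [← uIcc_of_le hab.le] at hV ⊢
    exact intervalIntegral.continuousOn_primitive_interval' hV.intervalIntegrable left_mem_uIcc
  have hderiv : ∀ t ∈ Ioo a b,
      HasDerivAt (fun t => φ t * Real.exp (A t)) ((φ' t + V t * φ t) * Real.exp (A t)) t :=
    fun t ht => ((hφ' t ht).mul (hA t ht).exp).congr_deriv (by ring)
  have hanti : StrictAntiOn (fun t => φ t * Real.exp (A t)) (Icc a b) := by
    refine strictAntiOn_of_deriv_neg (convex_Icc a b)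
      (hφ.mul (Real.continuous_exp.comp_continuousOn hA_cont)) fun t ht => ?_
    rw [interior_Icc] at ht
    rw [(hderiv t ht).deriv]
    exact mul_neg_of_neg_of_pos (hlt t ht) (Real.exp_pos _)
  have hdecr := hanti (left_mem_Icc.2 hab.le) (right_mem_Icc.2 hab.le) hab
  exact neg_of_mul_neg_left
    (hdecr.trans_le (mul_nonpos_of_nonpos_of_nonneg ha (Real.exp_pos _).le)) (Real.exp_pos _).le

/-- For `t < τ` and `0 < k`, the sign of `riccatiBarrier k τ t v` compares `v` with
`-k coth (k (τ - t))`, the solution of the Riccati equation `v' = k² - v²` that blows down to `-∞`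
at time `τ`. Multiplying through by `sinh` keeps it regular at `t = τ`, where its value is `k`. -/
noncomputable def riccatiBarrier (k τ t v : ℝ) : ℝ :=
  v * Real.sinh (k * (τ - t)) + k * Real.cosh (k * (τ - t))

lemma riccatiBarrier_self (k τ v : ℝ) : riccatiBarrier k τ τ v = k := by
  simp [riccatiBarrier]

lemma neg_of_riccatiBarrier_nonpos {k τ t v : ℝ} (hk : 0 < k) (ht : t ≤ τ)
    (h : riccatiBarrier k τ t v ≤ 0) : v < 0 := by
  by_contra! hv
  have hsinh : 0 ≤ Real.sinh (k * (τ - t)) :=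
    Real.sinh_nonneg_iff.2 (mul_nonneg hk.le (sub_nonneg.2 ht))
  exact h.not_gt (add_pos_of_nonneg_of_pos (mul_nonneg hv hsinh) (mul_pos hk (Real.cosh_pos _)))

lemma riccatiBarrier_neg_of_deriv_lt {V V' : ℝ → ℝ} {a b k τ : ℝ} (hk : 0 < k) (hab : a < b)
    (hbτ : b ≤ τ) (hV : ContinuousOn V (Icc a b)) (hV' : ∀ t ∈ Ioo a b, HasDerivAt V (V' t) t)
    (hlt : ∀ t ∈ Ioo a b, V' t < k ^ 2 - V t ^ 2) (ha : riccatiBarrier k τ a (V a) ≤ 0) :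
    riccatiBarrier k τ b (V b) < 0 := by
  have hφ : ContinuousOn (fun t => riccatiBarrier k τ t (V t)) (Icc a b) :=
    (hV.mul (by fun_prop)).add (by fun_prop)
  have hφ' : ∀ t ∈ Ioo a b, HasDerivAt (fun t => riccatiBarrier k τ t (V t))
      ((V' t - k ^ 2) * Real.sinh (k * (τ - t)) - k * V t * Real.cosh (k * (τ - t))) t := by
    intro t ht
    have hphase : HasDerivAt (fun t => k * (τ - t)) (-k) t := by
      simpa using ((hasDerivAt_id t).const_sub τ).const_mul k
    exact (((hV' t ht).mul hphase.sinh).add (hphase.cosh.const_mul k)).congr_deriv (by ring)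
  refine neg_of_deriv_add_mul_neg (φ := fun t => riccatiBarrier k τ t (V t)) hab hφ hV hφ'
    (fun t ht => ?_) ha
  have hsinh : 0 < Real.sinh (k * (τ - t)) :=
    Real.sinh_pos_iff.2 (mul_pos hk (sub_pos.2 (ht.2.trans_le hbτ)))
  calc (V' t - k ^ 2) * Real.sinh (k * (τ - t)) - k * V t * Real.cosh (k * (τ - t))
        + V t * riccatiBarrier k τ t (V t)
      = (V' t - (k ^ 2 - V t ^ 2)) * Real.sinh (k * (τ - t)) := by unfold riccatiBarrier; ring
    _ < 0 := mul_neg_of_neg_of_pos (sub_neg.2 (hlt t ht)) hsinh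

lemma cosh_eq_mul_sinh_of_two_mul_eq_log {y ε : ℝ} (hε : 0 < ε)
    (hy : 2 * y = Real.log (1 + 2 / ε)) : Real.cosh y = (1 + ε) * Real.sinh y := by
  have hexp : ε * (Real.exp y * Real.exp y) = ε + 2 := by
    rw [← Real.exp_add, ← two_mul, hy, Real.exp_log (by positivity)]
    field_simp
  have hinv : Real.exp (-y) * Real.exp y = 1 := by
    rw [← Real.exp_add, neg_add_cancel, Real.exp_zero]
  apply mul_right_cancel₀ (Real.exp_pos y).ne'
  rw [Real.cosh_eq, Real.sinh_eq]
  linear_combination (-1 / 2) * hexp + (1 + ε / 2) * hinv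

lemma riccatiBarrier_zero_nonpos {ε k τ v : ℝ} (hε : 0 < ε) (hk : 0 ≤ k) (hτ : 0 ≤ τ)
    (hlog : 2 * (k * τ) = Real.log (1 + 2 / ε)) (hv : v ≤ -(1 + ε) * k) :
    riccatiBarrier k τ 0 v ≤ 0 := by
  have hsinh : 0 ≤ Real.sinh (k * τ) := Real.sinh_nonneg_iff.2 (mul_nonneg hk hτ)
  rw [riccatiBarrier, sub_zero, cosh_eq_mul_sinh_of_two_mul_eq_log hε hlog]
  linarith [mul_le_mul_of_nonneg_right hv hsinh]

end Riccati

section Period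

lemma periodic_deriv {𝕜 F : Type*} [NontriviallyNormedField 𝕜] [NormedAddCommGroup F]
    [NormedSpace 𝕜 F] {f : 𝕜 → F} {c : 𝕜} (hf : Function.Periodic f c) :
    Function.Periodic (deriv f) c := fun x => by
  rw [← deriv_comp_add_const, hf.funext]

/-- The `L²` norm over the period `[0, 1]` of a `1`-periodic function. -/
noncomputable def unitL2Norm (f : ℝ → ℝ) : ℝ :=
  √(∫ x in (0 : ℝ)..1, f x ^ 2)

variable {f : ℝ → ℝ}

lemma unitL2Norm_pos (hf : Continuous f) (hper : Function.Periodic f 1) {x : ℝ} (hx : f x ≠ 0) :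
    0 < unitL2Norm f := by
  obtain ⟨y, hy, hxy⟩ := hper.exists_mem_Ico₀ one_pos x
  exact Real.sqrt_pos.2 <| intervalIntegral.integral_pos one_pos (by fun_prop)
    (fun _ _ => sq_nonneg _)
    ⟨y, Ico_subset_Icc_self hy, sq_pos_of_ne_zero (hxy ▸ hx)⟩

lemma integral_abs_le_unitL2Norm (hf : Continuous f) :
    ∫ x in (0 : ℝ)..1, |f x| ≤ unitL2Norm f := by
  have : IsProbabilityMeasure (volume.restrict (Ioc (0 : ℝ) 1)) := ⟨by simp⟩
  have hL2 : MemLp f 2 (volume.restrict (Ioc (0 : ℝ) 1)) :=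
    (memLp_two_iff_integrable_sq hf.aestronglyMeasurable).2
      ((hf.pow 2).integrableOn_Icc.mono_set Ioc_subset_Icc_self)
  simpa only [unitL2Norm, intervalIntegral.integral_of_le zero_le_one]
    using integral_abs_le_sqrt_integral_sq hL2

end Period

/-- The derivative `u_t + u u_x` of `u` in the direction of its own characteristics. -/
noncomputable def materialDeriv (u : ℝ → ℝ → ℝ) (t x : ℝ) : ℝ :=
  deriv (fun s => u s x) t + u t x * deriv (u t) x

namespace IsPeriodicOHSolution

variable {γ : ℝ} {S : Set ℝ} {u : ℝ → ℝ → ℝ} {t : ℝ}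

section Slices

lemma continuous_slice (h : IsPeriodicOHSolution γ S u) (ht : t ∈ S) : Continuous (u t) :=
  Differentiable.continuous (h.diff_x t ht)

lemma continuous_deriv (h : IsPeriodicOHSolution γ S u) (ht : t ∈ S) : Continuous (deriv (u t)) :=
  Differentiable.continuous (h.diff_xx t ht)

lemma continuous_timeDeriv (h : IsPeriodicOHSolution γ S u) (ht : t ∈ S) :
    Continuous fun x => deriv (fun s => u s x) t :=
  Differentiable.continuous (h.diff_tx t ht)

lemma periodic_timeDeriv (h : IsPeriodicOHSolution γ S u) (hS : S ∈ 𝓝 t) :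
    Function.Periodic (fun x => deriv (fun s => u s x) t) 1 := fun x => by
  refine EventuallyEq.deriv_eq ?_
  filter_upwards [hS] with s hs using h.periodic s hs x

lemma periodic_materialDeriv (h : IsPeriodicOHSolution γ S u) (hS : S ∈ 𝓝 t) :
    Function.Periodic (materialDeriv u t) 1 :=
  have hu := h.periodic t (mem_of_mem_nhds hS)
  (h.periodic_timeDeriv hS).add (Function.Periodic.mul hu (periodic_deriv hu))

lemma hasDerivAt_materialDeriv (h : IsPeriodicOHSolution γ S u) (ht : t ∈ S) (hpos : 0 < t)
    (x : ℝ) : HasDerivAt (materialDeriv u t) (γ * u t x) x := by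
  refine ((h.diff_tx t ht x).hasDerivAt.add
    ((h.diff_x t ht x).hasDerivAt.mul (h.diff_xx t ht x).hasDerivAt)).congr_deriv ?_
  rw [← h.eqn t ht hpos x]
  ring

end Slices

section Conservation

lemma integral_eq_zero (h : IsPeriodicOHSolution γ S u) (hγ : γ ≠ 0) (hS : S ∈ 𝓝 t)
    (hpos : 0 < t) : ∫ x in (0 : ℝ)..1, u t x = 0 := by
  have ht := mem_of_mem_nhds hS
  have hftc := intervalIntegral.integral_eq_sub_of_hasDerivAt (a := 0) (b := 1)
    (fun x _ => h.hasDerivAt_materialDeriv ht hpos x)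
    (((h.continuous_slice ht).const_mul γ).intervalIntegrable _ _)
  rw [(h.periodic_materialDeriv hS).eq, sub_self, intervalIntegral.integral_const_mul] at hftc
  exact (mul_eq_zero.1 hftc).resolve_left hγ

lemma integral_timeDeriv_eq_zero (h : IsPeriodicOHSolution γ S u) (hγ : γ ≠ 0) (hS : S ∈ 𝓝 t)
    (hpos : 0 < t) : ∫ x in (0 : ℝ)..1, deriv (fun s => u s x) t = 0 := by
  have hleibniz : HasDerivAt (fun s => ∫ x in (0 : ℝ)..1, u s x)
      (∫ x in (0 : ℝ)..1, deriv (fun s => u s x) t) t :=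
    hasDerivAt_intervalIntegral_of_continuousOn (F' := fun s x => deriv (fun r => u r x) s) hS
      (fun s hs => (h.continuous_slice hs).continuousOn)
      (h.cont_ut.mono (prod_mono subset_rfl (subset_univ _)))
      fun s hs x _ => (h.diff_t s hs x).hasDerivAt
  refine hleibniz.unique ((hasDerivAt_const t (0 : ℝ)).congr_of_eventuallyEq ?_)
  filter_upwards [eventually_mem_nhds_iff.2 hS, lt_mem_nhds hpos] with s hs hs_pos
  exact h.integral_eq_zero hγ hs hs_pos

lemma integral_materialDeriv_eq_zero (h : IsPeriodicOHSolution γ S u) (hγ : γ ≠ 0)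
    (hS : S ∈ 𝓝 t) (hpos : 0 < t) : ∫ x in (0 : ℝ)..1, materialDeriv u t x = 0 := by
  have ht := mem_of_mem_nhds hS
  have huu_x : Continuous fun x => u t x * deriv (u t) x :=
    (h.continuous_slice ht).mul (h.continuous_deriv ht)
  have hprimitive (x : ℝ) : HasDerivAt (fun y => u t y ^ 2 / 2) (u t x * deriv (u t) x) x :=
    (((h.diff_x t ht x).hasDerivAt.pow 2).div_const 2).congr_deriv (by ring)
  have hper : u t 1 = u t 0 := Function.Periodic.eq (h.periodic t ht)
  unfold materialDeriv
  rw [intervalIntegral.integral_add ((h.continuous_timeDeriv ht).intervalIntegrable _ _)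
      (huu_x.intervalIntegrable _ _), h.integral_timeDeriv_eq_zero hγ hS hpos, zero_add,
    intervalIntegral.integral_eq_sub_of_hasDerivAt (fun x _ => hprimitive x)
      (huu_x.intervalIntegrable _ _), hper, sub_self]

lemma integral_mul_timeDeriv_eq_zero (h : IsPeriodicOHSolution γ S u) (hγ : γ ≠ 0)
    (hS : S ∈ 𝓝 t) (hpos : 0 < t) :
    ∫ x in (0 : ℝ)..1, 2 * u t x * deriv (fun s => u s x) t = 0 := by
  have ht := mem_of_mem_nhds hS
  -- With `w = u_t + u u_x` and `w_x = γ u`, we have `u u_t = w w_x / γ - u² u_x`.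
  have hprimitive (x : ℝ) :
      HasDerivAt (fun y => materialDeriv u t y ^ 2 / γ - 2 / 3 * u t y ^ 3)
        (2 * u t x * deriv (fun s => u s x) t) x := by
    refine ((((h.hasDerivAt_materialDeriv ht hpos x).pow 2).div_const γ).sub
      (((h.diff_x t ht x).hasDerivAt.pow 3).const_mul (2 / 3))).congr_deriv ?_
    unfold materialDeriv
    field_simp
    ring
  have hper : u t 1 = u t 0 := Function.Periodic.eq (h.periodic t ht)
  rw [intervalIntegral.integral_eq_sub_of_hasDerivAt (fun x _ => hprimitive x)
      ((((h.continuous_slice ht).const_mul 2).mul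
        (h.continuous_timeDeriv ht)).intervalIntegrable _ _),
    (h.periodic_materialDeriv hS).eq, hper, sub_self]

lemma hasDerivAt_integral_sq (h : IsPeriodicOHSolution γ S u) (hγ : γ ≠ 0) (hS : S ∈ 𝓝 t)
    (hpos : 0 < t) : HasDerivAt (fun s => ∫ x in (0 : ℝ)..1, u s x ^ 2) 0 t := by
  have hsub : S ×ˢ uIcc (0 : ℝ) 1 ⊆ S ×ˢ univ := prod_mono subset_rfl (subset_univ _)
  exact (hasDerivAt_intervalIntegral_of_continuousOn (F := fun s x => u s x ^ 2)
    (F' := fun s x => 2 * u s x * deriv (fun r => u r x) s) hS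
    (fun s hs => ((h.continuous_slice hs).pow 2).continuousOn)
    ((continuousOn_const.mul (h.cont_u.mono hsub)).mul (h.cont_ut.mono hsub))
    fun s hs x _ => ((h.diff_t s hs x).hasDerivAt.pow 2).congr_deriv (by ring)).congr_deriv
      (h.integral_mul_timeDeriv_eq_zero hγ hS hpos)

lemma unitL2Norm_eq {a b : ℝ} (h : IsPeriodicOHSolution γ S u) (hγ : γ ≠ 0) (ha : 0 ≤ a)
    (hab : a ≤ b) (hS : Icc a b ⊆ S) : unitL2Norm (u b) = unitL2Norm (u a) := by
  obtain rfl | hlt := hab.eq_or_lt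
  · rfl
  have hcont : ContinuousOn (fun s => ∫ x in (0 : ℝ)..1, u s x ^ 2) (Icc a b) :=
    continuousOn_intervalIntegral_of_continuousOn
      ((h.cont_u.mono (prod_mono hS subset_rfl)).pow 2) 0 1
  obtain ⟨c, -, hslope⟩ := exists_hasDerivAt_eq_slope _ (fun _ => 0) hlt hcont fun s hs =>
    h.hasDerivAt_integral_sq hγ (mem_of_superset (Icc_mem_nhds hs.1 hs.2) hS) (ha.trans_lt hs.1)
  rw [eq_comm, div_eq_zero_iff, or_iff_left (sub_pos.2 hlt).ne', sub_eq_zero] at hslope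
  exact congrArg Real.sqrt hslope

lemma abs_materialDeriv_le {T : ℝ} (h : IsPeriodicOHSolution γ (Ico 0 T) u) (hγ : 0 < γ)
    (ht : t ∈ Ioo 0 T) (x : ℝ) : |materialDeriv u t x| ≤ γ * unitL2Norm (u 0) := by
  have ht' := Ioo_subset_Ico_self ht
  have hnhds : Ico 0 T ∈ 𝓝 t := Ico_mem_nhds ht.1 ht.2
  obtain ⟨y, hy, hxy⟩ := (h.periodic_materialDeriv hnhds).exists_mem_Ico₀ one_pos x
  calc |materialDeriv u t x| = |materialDeriv u t y| := by rw [hxy]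
    _ ≤ ∫ z in (0 : ℝ)..1, |γ * u t z| :=
        abs_le_integral_abs_deriv_of_integral_eq_zero one_pos
          (fun z _ => h.hasDerivAt_materialDeriv ht' ht.1 z)
          (((h.continuous_slice ht').const_mul γ).intervalIntegrable _ _)
          (h.integral_materialDeriv_eq_zero hγ.ne' hnhds ht.1) (Ico_subset_Icc_self hy)
    _ = γ * ∫ z in (0 : ℝ)..1, |u t z| := by
        simp only [abs_mul, abs_of_pos hγ, intervalIntegral.integral_const_mul]
    _ ≤ γ * unitL2Norm (u t) := by
        gcongr
        exact integral_abs_le_unitL2Norm (h.continuous_slice ht')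
    _ = γ * unitL2Norm (u 0) := by
        rw [h.unitL2Norm_eq hγ.ne' le_rfl ht.1.le (Icc_subset_Ico_right ht.2)]

end Conservation

section Characteristics

variable {X : ℝ → ℝ}

lemma exists_characteristic {a b : ℝ} (h : IsPeriodicOHSolution γ S u) (hab : a ≤ b)
    (hS : Icc a b ⊆ S) (x : ℝ) :
    ∃ X : ℝ → ℝ, X a = x ∧ ∀ t ∈ Icc a b, HasDerivWithinAt X (u t (X t)) (Icc a b) t := by
  have hstrip : Icc a b ×ˢ (univ : Set ℝ) ⊆ S ×ˢ univ := prod_mono hS subset_rfl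
  obtain ⟨C, hC⟩ := exists_nnnorm_le_of_periodic isCompact_Icc one_pos (h.cont_u.mono hstrip)
    fun t ht => h.periodic t (hS ht)
  obtain ⟨K, hK⟩ := exists_nnnorm_le_of_periodic isCompact_Icc one_pos (h.cont_ux.mono hstrip)
    fun t ht => periodic_deriv (h.periodic t (hS ht))
  exact exists_hasDerivWithinAt_of_bounded_lipschitz hab
    (fun x => h.cont_u.comp (f := fun t => (t, x)) (by fun_prop) fun t ht => ⟨hS ht, trivial⟩) hC
    (fun t ht => lipschitzWith_of_nnnorm_deriv_le (h.diff_x t (hS ht)) (hK t ht)) x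

lemma hasDerivAt_deriv_time (h : IsPeriodicOHSolution γ S u) (hS : S ∈ 𝓝 t) (x : ℝ) :
    HasDerivAt (fun r => deriv (u r) x) (deriv (fun y => deriv (fun s => u s y) t) x) t :=
  hasDerivAt_partialDeriv_of_mixed (ft := fun r y => deriv (fun s => u s y) r)
    (fx := fun r y => deriv (u r) y)
    (ftx := fun r y => deriv (fun z => deriv (fun s => u s z) r) y) hS
    (fun r hr y => (h.diff_t r hr y).hasDerivAt) (fun r hr => (h.diff_x r hr x).hasDerivAt)
    (fun r hr y => (h.diff_tx r hr y).hasDerivAt)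
    (fun y => h.cont_ut.comp (f := fun r => (r, y)) (by fun_prop) fun r hr => ⟨hr, trivial⟩)
    h.cont_utx

lemma hasDerivAt_along_characteristic (h : IsPeriodicOHSolution γ S u) (hS : S ∈ 𝓝 t)
    (hX : HasDerivAt X (u t (X t)) t) :
    HasDerivAt (fun r => u r (X r)) (materialDeriv u t (X t)) t := by
  have hstrip : S ×ˢ univ ∈ 𝓝 (t, X t) := prod_mem_nhds hS univ_mem
  refine hasDerivAt_comp_curve (ft := fun r y => deriv (fun s => u s y) r)
    (fx := fun r y => deriv (u r) y) ?_ ?_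
    (h.cont_ut.continuousAt hstrip) (h.cont_ux.continuousAt hstrip) hX
  · filter_upwards [hstrip] with p hp using (h.diff_t p.1 hp.1 p.2).hasDerivAt
  · filter_upwards [hstrip] with p hp using (h.diff_x p.1 hp.1 p.2).hasDerivAt

lemma hasDerivAt_deriv_along_characteristic (h : IsPeriodicOHSolution γ S u) (hS : S ∈ 𝓝 t)
    (hpos : 0 < t) (hX : HasDerivAt X (u t (X t)) t) :
    HasDerivAt (fun r => deriv (u r) (X r)) (γ * u t (X t) - deriv (u t) (X t) ^ 2) t := by
  have hstrip : S ×ˢ univ ∈ 𝓝 (t, X t) := prod_mem_nhds hS univ_mem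
  refine (hasDerivAt_comp_curve (f := fun r y => deriv (u r) y)
    (ft := fun r y => deriv (fun z => deriv (fun s => u s z) r) y)
    (fx := fun r y => deriv (deriv (u r)) y) ?_ ?_
    (h.cont_utx.continuousAt hstrip) (h.cont_uxx.continuousAt hstrip) hX).congr_deriv ?_
  · filter_upwards [prod_mem_nhds (eventually_mem_nhds_iff.2 hS) univ_mem] with p hp
    exact h.hasDerivAt_deriv_time hp.1 p.2
  · filter_upwards [hstrip] with p hp using (h.diff_xx p.1 hp.1 p.2).hasDerivAt
  · rw [← h.eqn t (mem_of_mem_nhds hS) hpos (X t), smul_eq_mul]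
    ring

end Characteristics

section WaveBreaking

variable {T : ℝ}

lemma le_along_characteristic {X : ℝ → ℝ} {a b : ℝ} (h : IsPeriodicOHSolution γ (Ico 0 T) u)
    (hγ : 0 < γ) (ha : 0 ≤ a) (hbT : b < T)
    (hX : ∀ t ∈ Icc a b, HasDerivWithinAt X (u t (X t)) (Icc a b) t) (ht : t ∈ Icc a b) :
    u t (X t) ≤ u a (X a) + γ * (t - a) * unitL2Norm (u 0) := by
  have hderiv : ∀ s ∈ interior (Icc a b),
      HasDerivAt (fun r => u r (X r)) (materialDeriv u s (X s)) s := fun s hs => by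
    rw [interior_Icc] at hs
    exact h.hasDerivAt_along_characteristic
      (Ico_mem_nhds (ha.trans_lt hs.1) (hs.2.trans hbT))
      ((hX s (Ioo_subset_Icc_self hs)).hasDerivAt (Icc_mem_nhds hs.1 hs.2))
  have hcont : ContinuousOn (fun r => u r (X r)) (Icc a b) :=
    h.cont_u.comp (continuousOn_id.prodMk fun s hs => (hX s hs).continuousWithinAt)
      fun s hs => ⟨⟨ha.trans hs.1, hs.2.trans_lt hbT⟩, trivial⟩
  have hgrowth := (convex_Icc a b).image_sub_le_mul_sub_of_deriv_le hcont
    (fun s hs => (hderiv s hs).differentiableAt.differentiableWithinAt)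
    (C := γ * unitL2Norm (u 0)) (fun s hs => by
      rw [(hderiv s hs).deriv]
      rw [interior_Icc] at hs
      exact (le_abs_self _).trans
        (h.abs_materialDeriv_le hγ ⟨ha.trans_lt hs.1, hs.2.trans hbT⟩ _))
    a (left_mem_Icc.2 (ht.1.trans ht.2)) t ht ht.1
  linarith

lemma exists_riccatiBarrier_neg {a b k τ x : ℝ} (h : IsPeriodicOHSolution γ (Ico 0 T) u)
    (hγ : 0 < γ) (ha : 0 ≤ a) (hab : a < b) (hbT : b < T) (hbτ : b ≤ τ) (hk : 0 < k)
    (hL : 0 < unitL2Norm (u 0)) (hgrowth : γ * (u a x + γ * (b - a) * unitL2Norm (u 0)) ≤ k ^ 2)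
    (hx : riccatiBarrier k τ a (deriv (u a) x) ≤ 0) :
    ∃ y, u b y ≤ u a x + γ * (b - a) * unitL2Norm (u 0) ∧
      riccatiBarrier k τ b (deriv (u b) y) < 0 := by
  have hmem : Icc a b ⊆ Ico 0 T := Icc_subset_Ico_iff hab.le |>.2 ⟨ha, hbT⟩
  obtain ⟨X, rfl, hX⟩ := h.exists_characteristic hab.le hmem x
  have hle := fun t => h.le_along_characteristic hγ ha hbT hX (t := t)
  have hcont : ContinuousOn (fun t => deriv (u t) (X t)) (Icc a b) :=
    h.cont_ux.comp (continuousOn_id.prodMk fun t ht => (hX t ht).continuousWithinAt)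
      fun t ht => ⟨hmem ht, trivial⟩
  refine ⟨X b, hle b (right_mem_Icc.2 hab.le), ?_⟩
  refine riccatiBarrier_neg_of_deriv_lt (V := fun t => deriv (u t) (X t))
    (V' := fun t => γ * u t (X t) - deriv (u t) (X t) ^ 2) hk hab hbτ hcont
    (fun t ht => ?_) (fun t ht => ?_) hx
  · exact h.hasDerivAt_deriv_along_characteristic
      (Ico_mem_nhds (ha.trans_lt ht.1) (ht.2.trans hbT)) (ha.trans_lt ht.1)
      ((hX t (Ioo_subset_Icc_self ht)).hasDerivAt (Icc_mem_nhds ht.1 ht.2))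
  · refine sub_lt_sub_right (lt_of_lt_of_le ?_ hgrowth) _
    calc γ * u t (X t) ≤ γ * (u a (X a) + γ * (t - a) * unitL2Norm (u 0)) := by
          gcongr
          exact hle t (Ioo_subset_Icc_self ht)
      _ < γ * (u a (X a) + γ * (b - a) * unitL2Norm (u 0)) := by
          gcongr
          exact ht.2

lemma unitL2Norm_pos_of_deriv_ne_zero (h : IsPeriodicOHSolution γ S u) (ht : t ∈ S) {x : ℝ}
    (hx : deriv (u t) x ≠ 0) : 0 < unitL2Norm (u t) := by
  obtain ⟨y, hy⟩ : ∃ y, u t y ≠ 0 := by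
    by_contra! hzero
    exact hx (by simp [funext hzero])
  exact unitL2Norm_pos (h.continuous_slice ht) (h.periodic t ht) hy

lemma lifespan_lt_of_riccatiBarrier_nonpos {k τ x₀ : ℝ}
    (h : IsPeriodicOHSolution γ (Ico 0 T) u) (hγ : 0 < γ) (hk : 0 < k) (hτ : 0 < τ)
    (hgrowth : γ * (u 0 x₀ + γ * τ * unitL2Norm (u 0)) ≤ k ^ 2)
    (hx₀ : riccatiBarrier k τ 0 (deriv (u 0) x₀) ≤ 0) : T < τ := by
  by_contra! hτT
  set L := unitL2Norm (u 0)
  have hL : 0 < L := h.unitL2Norm_pos_of_deriv_ne_zero ⟨le_rfl, hτ.trans_le hτT⟩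
    (neg_of_riccatiBarrier_nonpos hk hτ.le hx₀).ne
  have hhalf : τ / 2 < τ := half_lt_self hτ
  -- The barrier is crossed strictly by time `τ / 2`, so that the blow-up time can be moved forward
  -- from `τ` to some `σ < τ`, at which the solution still exists.
  obtain ⟨y, hy, hbarrier⟩ := h.exists_riccatiBarrier_neg hγ le_rfl (half_pos hτ)
    (hhalf.trans_le hτT) hhalf.le hk hL (hgrowth.trans' (by gcongr; linarith)) hx₀
  have hcont : Continuous fun σ => riccatiBarrier k σ (τ / 2) (deriv (u (τ / 2)) y) := by
    unfold riccatiBarrier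
    fun_prop
  obtain ⟨σ, hσ, hτσ, hστ⟩ : ∃ σ, riccatiBarrier k σ (τ / 2) (deriv (u (τ / 2)) y) < 0 ∧
      τ / 2 < σ ∧ σ < τ :=
    ((((hcont.tendsto τ).mono_left nhdsWithin_le_nhds).eventually_lt_const hbarrier).and
      (Ioo_mem_nhdsLT hhalf)).exists
  have hgrowth' : γ * (u (τ / 2) y + γ * (σ - τ / 2) * L) ≤ k ^ 2 := by
    refine hgrowth.trans' (mul_le_mul_of_nonneg_left ?_ hγ.le)
    calc u (τ / 2) y + γ * (σ - τ / 2) * L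
        ≤ u 0 x₀ + γ * (τ / 2 - 0) * L + γ * (τ - τ / 2) * L := by gcongr
      _ = u 0 x₀ + γ * τ * L := by ring
  obtain ⟨z, -, hz⟩ := h.exists_riccatiBarrier_neg hγ (half_pos hτ).le hτσ (hστ.trans_le hτT)
    le_rfl hk hL hgrowth' hσ.le
  exact (hz.trans hk).ne (riccatiBarrier_self k σ _)

end WaveBreaking

end IsPeriodicOHSolution

theorem wave_breaking_characteristics_general {γ ε T T₁ x₀ : ℝ} {u : ℝ → ℝ → ℝ} (hγ : 0 < γ)
    (hε : 0 < ε) (h : IsPeriodicOHSolution γ (Ico 0 T) u) (hT₁ : 0 < T₁)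
    (hroot : 2 * √γ * T₁ * √((⨆ y, |u 0 y|) + γ * T₁ * unitL2Norm (u 0)) = Real.log (1 + 2 / ε))
    (hslope : deriv (u 0) x₀ ≤
      -(1 + ε) * √γ * √((⨆ y, |u 0 y|) + γ * T₁ * unitL2Norm (u 0))) : T < T₁ := by
  obtain hT | hT := le_or_gt T 0
  · exact hT.trans_lt hT₁
  have h0 : (0 : ℝ) ∈ Ico 0 T := ⟨le_rfl, hT⟩
  set A := (⨆ y, |u 0 y|) + γ * T₁ * unitL2Norm (u 0) with hA_def
  set k := √γ * √A
  have hkT₁ : 2 * (k * T₁) = Real.log (1 + 2 / ε) := by rw [← hroot]; ring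
  have hlog : 0 < Real.log (1 + 2 / ε) := Real.log_pos (lt_add_of_pos_right 1 (by positivity))
  have hk : 0 < k := pos_of_mul_pos_left (by linarith) hT₁.le
  have hA : 0 < A := Real.sqrt_pos.1 (pos_of_mul_pos_right hk (Real.sqrt_nonneg γ))
  have hk_sq : k ^ 2 = γ * A := by rw [mul_pow, Real.sq_sqrt hγ.le, Real.sq_sqrt hA.le]
  have hbdd : BddAbove (range fun y => |u 0 y|) :=
    (Function.Periodic.isBounded_of_continuous (f := fun y => |u 0 y|)
      (fun x => congrArg abs (h.periodic 0 h0 x)) one_ne_zero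
      (h.continuous_slice h0).abs).bddAbove
  have hsup : u 0 x₀ ≤ ⨆ y, |u 0 y| := (le_abs_self _).trans (le_ciSup hbdd x₀)
  refine h.lifespan_lt_of_riccatiBarrier_nonpos hγ hk hT₁ (x₀ := x₀) ?_
    (riccatiBarrier_zero_nonpos hε hk.le hT₁.le hkT₁ ?_)
  · rw [hk_sq, hA_def]
    gcongr
  · rwa [mul_assoc] at hslope

/-- wave breaking via characteristics.  If `T₁` is the smallest positive
root of `2√γ T₁ (‖u₀‖_{L∞} + γ T₁ ‖u₀‖_{L²})^{1/2} = log(1 + 2/ε)` and some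
`u₀'(x₀) ≤ -(1+ε)√γ (‖u₀‖_{L∞} + γ T₁ ‖u₀‖_{L²})^{1/2}`, then every periodic classical
solution with initial data `u₀` and `u_x` bounded from below has `T < T₁`. -/
theorem wave_breaking_characteristics
    (γ ε : ℝ) (hγ : 0 < γ) (hε : 0 < ε)
    (u₀ : ℝ → ℝ) (hreg : ContDiff ℝ 2 u₀) (hper : ∀ x : ℝ, u₀ (x + 1) = u₀ x)
    (hmean : (∫ x in (0:ℝ)..1, u₀ x) = 0)
    (T₁ : ℝ) (hT₁pos : 0 < T₁)
    (hroot : 2 * Real.sqrt γ * T₁ *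
        Real.sqrt ((⨆ y : ℝ, |u₀ y|) + γ * T₁ * Real.sqrt (∫ x in (0:ℝ)..1, (u₀ x) ^ 2))
      = Real.log (1 + 2 / ε))
    (hsmallest : ∀ T' : ℝ, 0 < T' →
      2 * Real.sqrt γ * T' *
          Real.sqrt ((⨆ y : ℝ, |u₀ y|) + γ * T' * Real.sqrt (∫ x in (0:ℝ)..1, (u₀ x) ^ 2))
        = Real.log (1 + 2 / ε) → T₁ ≤ T')
    (x₀ : ℝ)
    (hslope : deriv u₀ x₀ ≤ -(1 + ε) * Real.sqrt γ *
      Real.sqrt ((⨆ y : ℝ, |u₀ y|) + γ * T₁ * Real.sqrt (∫ x in (0:ℝ)..1, (u₀ x) ^ 2))) :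
    ∀ (T : ℝ) (u : ℝ → ℝ → ℝ),
      IsPeriodicOHSolution γ (Set.Ico 0 T) u →
      u 0 = u₀ →
      (∃ c : ℝ, ∀ t ∈ Set.Ico (0 : ℝ) T, ∀ x : ℝ, c ≤ deriv (u t) x) →
      T < T₁ := by
  rintro T u h rfl -
  exact wave_breaking_characteristics_general hγ hε h hT₁pos hroot hslope
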